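/- arXiv:1909.08345 — 2 statements merged into one kernel-verified Lean document; each statement's English description precedes it below -/
import Mathlib

section
/- Let E, A, R_x, R_z be h×h real matrices with R_x and R_z invertible, B an h×k real matrix, C an l×h real matrix, M a k×k real symmetric positive definite matrix, and 0 < λ_min ≤ λ real numbers. Set K_u = −(1/2)·Bᵀ·R_z⁻¹ and K_z = −(1/(2λ_min))·R_x⁻ᵀ·Cᵀ. Assume: (i) EᵀR_x = R_xᵀE ⪰ 0; (ii) R_zᵀEᵀ = E·R_z ⪰ 0; (iii) the symmetric 3×3 block matrix Θ(λ) with upper blocks Θ₁₁ = A·R_z + R_zᵀAᵀ − B·Bᵀ, Θ₁₂ = −(λ/(2λ_min))·R_x⁻ᵀ·CᵀC, Θ₁₃ = (1/2)·B·M, Θ₂₂ = R_xᵀA + AᵀR_x − CᵀC, Θ₂₃ = 0, Θ₃₃ = −M (lower blocks being the transposes) satisfies Θ(λ) ≺ 0. Let ẑ, x̂ : ℝ → ℝ^h be differentiable functions satisfying, for all t, E·ẑ′(t) = (A + B·K_u)·ẑ(t) + λ·K_z·C·x̂(t) and E·x̂′(t) = (A + λ·K_z·C)·x̂(t). Then V(t)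 := x̂(t)ᵀ(EᵀR_x)x̂(t) + ẑ(t)ᵀ(Eᵀ·R_z⁻¹)ẑ(t) is differentiable and satisfies V′(t) ≤ −(K_u·ẑ(t))ᵀ·M·(K_u·ẑ(t)) for all t. -/
open Matrix

/-- The symmetric 3×3 block matrix `Θ(μ)` of the paper's Theorem 2, with blocks of
sizes `h, h, k`:
`Θ₁₁ = A R_z + R_zᵀ Aᵀ − B Bᵀ`, `Θ₁₂ = −(μ/(2λ_min)) R_x⁻ᵀ CᵀC`, `Θ₁₃ = (1/2) B M`,
`Θ₂₂ = R_xᵀ A + Aᵀ R_x − CᵀC`, `Θ₂₃ = 0`, `Θ₃₃ = −M`, lower blocks the transposes. -/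
noncomputable def Theta {h k l : ℕ}
    (A Rx Rz : Matrix (Fin h) (Fin h) ℝ)
    (B : Matrix (Fin h) (Fin k) ℝ) (C : Matrix (Fin l) (Fin h) ℝ)
    (M : Matrix (Fin k) (Fin k) ℝ) (lmin mu : ℝ) :
    Matrix ((Fin h ⊕ Fin h) ⊕ Fin k) ((Fin h ⊕ Fin h) ⊕ Fin k) ℝ :=
  Matrix.fromBlocks
    (Matrix.fromBlocks (A * Rz + Rzᵀ * Aᵀ - B * Bᵀ)
      (-(mu / (2 * lmin)) • ((Rx⁻¹)ᵀ * (Cᵀ * C)))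
      (-(mu / (2 * lmin)) • ((Rx⁻¹)ᵀ * (Cᵀ * C)))ᵀ
      (Rxᵀ * A + Aᵀ * Rx - Cᵀ * C))
    (Matrix.fromRows ((1 / 2 : ℝ) • (B * M)) 0)
    (Matrix.fromCols ((1 / 2 : ℝ) • (B * M))ᵀ 0)
    (-M)


lemma quad_hasDerivAt {n : ℕ} (N : Matrix (Fin n) (Fin n) ℝ) (hN : Nᵀ = N)
    (x : ℝ → Fin n → ℝ) (hx : Differentiable ℝ x) (t : ℝ) :
    HasDerivAt (fun t => x t ⬝ᵥ N.mulVec (x t)) (2 * (x t ⬝ᵥ N.mulVec (deriv x t))) t := by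
  have hd : ∀ i, HasDerivAt (fun t => x t i) (deriv x t i) t :=
    hasDerivAt_pi.1 (hx t).hasDerivAt
  have h1 : ∀ i, HasDerivAt (fun t => N.mulVec (x t) i) (N.mulVec (deriv x t) i) t := by
    intro i
    simp only [Matrix.mulVec, dotProduct]
    exact HasDerivAt.fun_sum fun j _ => (hd j).const_mul (N i j)
  have h2 : HasDerivAt (fun t => x t ⬝ᵥ N.mulVec (x t))
      (∑ i, (deriv x t i * N.mulVec (x t) i + x t i * N.mulVec (deriv x t) i)) t := by
    simp only [dotProduct]
    exact HasDerivAt.fun_sum fun j _ => (hd j).mul (h1 j)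
  convert h2 using 1
  rw [Finset.sum_add_distrib]
  change _ = deriv x t ⬝ᵥ N.mulVec (x t) + x t ⬝ᵥ N.mulVec (deriv x t)
  have : deriv x t ⬝ᵥ N.mulVec (x t) = x t ⬝ᵥ N.mulVec (deriv x t) := by
    rw [Matrix.dotProduct_mulVec, ← Matrix.mulVec_transpose, hN, dotProduct_comm]
  rw [this]; ring

lemma theta_quad {h k l : ℕ}
    (A Rx Rz : Matrix (Fin h) (Fin h) ℝ)
    (B : Matrix (Fin h) (Fin k) ℝ) (C : Matrix (Fin l) (Fin h) ℝ)
    (M : Matrix (Fin k) (Fin k) ℝ) (hM : Mᵀ = M) (lmin mu : ℝ) (w x : Fin h → ℝ)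
    (y : Fin k → ℝ) :
    Sum.elim (Sum.elim w x) y ⬝ᵥ
      (Theta A Rx Rz B C M lmin mu).mulVec (Sum.elim (Sum.elim w x) y) =
    2 * (w ⬝ᵥ (A * Rz).mulVec w) - (Bᵀ.mulVec w ⬝ᵥ Bᵀ.mulVec w)
    - (mu / lmin) * (w ⬝ᵥ ((Rx⁻¹)ᵀ * (Cᵀ * C)).mulVec x)
    + (Bᵀ.mulVec w ⬝ᵥ M.mulVec y)
    + 2 * (x ⬝ᵥ (Rxᵀ * A).mulVec x) - (C.mulVec x ⬝ᵥ C.mulVec x)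
    - y ⬝ᵥ M.mulVec y := by
  have tr : ∀ {m n : ℕ} (N : Matrix (Fin m) (Fin n) ℝ) (a : Fin n → ℝ) (b : Fin m → ℝ),
      a ⬝ᵥ Nᵀ.mulVec b = b ⬝ᵥ N.mulVec a := by
    intro m n N a b
    rw [Matrix.mulVec_transpose, dotProduct_comm, Matrix.dotProduct_mulVec]
  have e1 : w ⬝ᵥ (Rzᵀ * Aᵀ).mulVec w = w ⬝ᵥ (A * Rz).mulVec w := by
    rw [← Matrix.transpose_mul, tr]
  have e2 : x ⬝ᵥ (Aᵀ * Rx).mulVec x = x ⬝ᵥ (Rxᵀ * A).mulVec x := by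
    rw [← tr (Rxᵀ * A), Matrix.transpose_mul, Matrix.transpose_transpose]
  have e3 : w ⬝ᵥ (B * Bᵀ).mulVec w = Bᵀ.mulVec w ⬝ᵥ Bᵀ.mulVec w := by
    rw [← Matrix.mulVec_mulVec, ← tr]
  have e4 : x ⬝ᵥ (Cᵀ * C).mulVec x = C.mulVec x ⬝ᵥ C.mulVec x := by
    rw [← Matrix.mulVec_mulVec, tr]
  have e5 : w ⬝ᵥ (B * M).mulVec y = Bᵀ.mulVec w ⬝ᵥ M.mulVec y := by
    rw [← Matrix.mulVec_mulVec, ← tr, dotProduct_comm]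
  have e6 : w ⬝ᵥ B.mulVec (Bᵀ.mulVec w) = Bᵀ.mulVec w ⬝ᵥ Bᵀ.mulVec w := by
    rw [← tr]
  unfold Theta
  simp only [Matrix.fromBlocks_mulVec, Sum.elim_comp_inl, Sum.elim_comp_inr,
    Matrix.fromRows_mulVec, Matrix.fromCols_mulVec, sumElim_dotProduct_sumElim,
    dotProduct_add, Matrix.zero_mulVec, add_zero, Matrix.add_mulVec, Matrix.sub_mulVec,
    dotProduct_sub, Matrix.neg_mulVec, dotProduct_neg, tr]
  simp only [Matrix.smul_mulVec, dotProduct_smul, smul_eq_mul, e1, e2, e3, e4, e5, e6, dotProduct_zero]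
  ring

/-- Dissipation inequality at the core of the paper's Theorem 2: along any trajectory
of the transformed closed-loop descriptor dynamics (7) with parameter `λ`, the Lyapunov
function `V(t) = x̂ᵀ(EᵀR_x)x̂ + ẑᵀ(EᵀR_z⁻¹)ẑ` is differentiable and its derivative is
dominated by minus the control energy rate. -/
theorem stmt11 (h k l : ℕ)
    (E A Rx Rz : Matrix (Fin h) (Fin h) ℝ)
    (hRx : IsUnit Rx.det) (hRz : IsUnit Rz.det)
    (B : Matrix (Fin h) (Fin k) ℝ) (C : Matrix (Fin l) (Fin h) ℝ)
    (M : Matrix (Fin k) (Fin k) ℝ) (hMsym : M.IsSymm) (hM : M.PosDef)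
    (lmin lam : ℝ) (hlmin : 0 < lmin) (hlam : lmin ≤ lam)
    (Ku : Matrix (Fin k) (Fin h) ℝ) (hKu : Ku = -(1 / 2 : ℝ) • (Bᵀ * Rz⁻¹))
    (Kz : Matrix (Fin h) (Fin l) ℝ) (hKz : Kz = -(1 / (2 * lmin)) • ((Rx⁻¹)ᵀ * Cᵀ))
    (h1 : Eᵀ * Rx = Rxᵀ * E) (h2 : (Eᵀ * Rx).PosSemidef)
    (h3 : Rzᵀ * Eᵀ = E * Rz) (h4 : (E * Rz).PosSemidef)
    (hTheta : (-(Theta A Rx Rz B C M lmin lam)).PosDef)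
    (zhat xhat : ℝ → Fin h → ℝ)
    (hz : Differentiable ℝ zhat) (hx : Differentiable ℝ xhat)
    (hzeq : ∀ t, E.mulVec (deriv zhat t)
      = (A + B * Ku).mulVec (zhat t) + lam • (Kz * C).mulVec (xhat t))
    (hxeq : ∀ t, E.mulVec (deriv xhat t) = (A + lam • (Kz * C)).mulVec (xhat t))
    (V : ℝ → ℝ)
    (hV : V = fun t => xhat t ⬝ᵥ (Eᵀ * Rx).mulVec (xhat t)
      + zhat t ⬝ᵥ (Eᵀ * Rz⁻¹).mulVec (zhat t)) :
    Differentiable ℝ V ∧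
      ∀ t, deriv V t ≤ -(Ku.mulVec (zhat t) ⬝ᵥ M.mulVec (Ku.mulVec (zhat t))) := by
  have hMt : Mᵀ = M := hMsym
  have hxs : (Eᵀ * Rx)ᵀ = Eᵀ * Rx := by
    rw [Matrix.transpose_mul, Matrix.transpose_transpose, h1]
  have hzr : Eᵀ * Rz⁻¹ = (Rz⁻¹)ᵀ * E := by
    have a1 : (Rz⁻¹)ᵀ * Rzᵀ = 1 := by
      rw [← Matrix.transpose_mul, Matrix.mul_nonsing_inv _ hRz, Matrix.transpose_one]
    calc Eᵀ * Rz⁻¹ = (Rz⁻¹)ᵀ * Rzᵀ * Eᵀ * Rz⁻¹ := by rw [a1, Matrix.one_mul]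
      _ = (Rz⁻¹)ᵀ * (Rzᵀ * Eᵀ) * Rz⁻¹ := by simp only [Matrix.mul_assoc]
      _ = (Rz⁻¹)ᵀ * E * (Rz * Rz⁻¹) := by rw [h3]; simp only [Matrix.mul_assoc]
      _ = _ := by rw [Matrix.mul_nonsing_inv _ hRz, Matrix.mul_one]
  have hzs : (Eᵀ * Rz⁻¹)ᵀ = Eᵀ * Rz⁻¹ := by
    rw [Matrix.transpose_mul, Matrix.transpose_transpose, hzr]
  have hD : ∀ t, HasDerivAt V _ t := fun t => by
    rw [hV]
    exact (quad_hasDerivAt _ hxs xhat hx t).add (quad_hasDerivAt _ hzs zhat hz t)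
  refine ⟨fun t => (hD t).differentiableAt, fun t => ?_⟩
  rw [(hD t).deriv]
  have tr : ∀ {m n : ℕ} (N : Matrix (Fin m) (Fin n) ℝ) (a : Fin n → ℝ) (b : Fin m → ℝ),
      a ⬝ᵥ Nᵀ.mulVec b = N.mulVec a ⬝ᵥ b := by
    intro m n N a b
    rw [Matrix.mulVec_transpose, dotProduct_comm, ← Matrix.dotProduct_mulVec, dotProduct_comm]
  generalize hw : Rz⁻¹.mulVec (zhat t) = w
  have hzw : zhat t = Rz.mulVec w := by
    rw [← hw, Matrix.mulVec_mulVec, Matrix.mul_nonsing_inv _ hRz, Matrix.one_mulVec]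
  have hu : Ku.mulVec (zhat t) = -((1 / 2 : ℝ) • Bᵀ.mulVec w) := by
    rw [hKu, Matrix.smul_mulVec, ← Matrix.mulVec_mulVec, hw, neg_smul]
  have hRxx : Rxᵀ * (Rx⁻¹)ᵀ = 1 := by
    rw [← Matrix.transpose_mul, Matrix.nonsing_inv_mul _ hRx, Matrix.transpose_one]
  have ex : xhat t ⬝ᵥ (Eᵀ * Rx).mulVec (deriv xhat t) =
      xhat t ⬝ᵥ (Rxᵀ * A).mulVec (xhat t)
        - lam / (2 * lmin) * (C.mulVec (xhat t) ⬝ᵥ C.mulVec (xhat t)) := by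
    rw [h1, ← Matrix.mulVec_mulVec, hxeq, Matrix.mulVec_mulVec, Matrix.mul_add, hKz]
    have : Rxᵀ * (lam • ((-(1 / (2 * lmin)) • ((Rx⁻¹)ᵀ * Cᵀ)) * C))
        = (-(lam / (2 * lmin))) • (Cᵀ * C) := by
      rw [Matrix.smul_mul, smul_smul, Matrix.mul_smul, ← Matrix.mul_assoc, ← Matrix.mul_assoc,
        hRxx, Matrix.one_mul]
      congr 1; ring
    rw [this, Matrix.add_mulVec, dotProduct_add, Matrix.smul_mulVec, dotProduct_smul,
      ← Matrix.mulVec_mulVec (M := Cᵀ), tr, smul_eq_mul]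
    ring
  have ez : zhat t ⬝ᵥ (Eᵀ * Rz⁻¹).mulVec (deriv zhat t) =
      w ⬝ᵥ (A * Rz).mulVec w - 1 / 2 * (Bᵀ.mulVec w ⬝ᵥ Bᵀ.mulVec w)
        - lam / (2 * lmin) * (w ⬝ᵥ ((Rx⁻¹)ᵀ * (Cᵀ * C)).mulVec (xhat t)) := by
    have eB : w ⬝ᵥ B.mulVec (Bᵀ.mulVec w) = Bᵀ.mulVec w ⬝ᵥ Bᵀ.mulVec w := by
      have := tr Bᵀ w (Bᵀ.mulVec w)
      rwa [Matrix.transpose_transpose] at this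
    rw [hzr, ← Matrix.mulVec_mulVec, tr, hw, hzeq, Matrix.add_mulVec,
      ← Matrix.mulVec_mulVec (M := B), hu, hKz, Matrix.smul_mul, Matrix.mul_assoc,
      Matrix.smul_mulVec, hzw, Matrix.mulVec_mulVec, Matrix.mulVec_neg, Matrix.mulVec_smul]
    simp only [dotProduct_add, dotProduct_neg, dotProduct_smul, smul_eq_mul, eB]
    ring
  have hq := hTheta.posSemidef.dotProduct_mulVec_nonneg
    (Sum.elim (Sum.elim w (xhat t)) ((1 / 2 : ℝ) • Bᵀ.mulVec w))
  rw [star_trivial, Matrix.neg_mulVec, dotProduct_neg, theta_quad _ _ _ _ _ _ hMt] at hq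
  have hC : 0 ≤ C.mulVec (xhat t) ⬝ᵥ C.mulVec (xhat t) := by
    simpa using dotProduct_star_self_nonneg (C.mulVec (xhat t))
  have hge : 1 ≤ lam / lmin := (one_le_div hlmin).2 hlam
  have hhalf : lam / (2 * lmin) = (lam / lmin) / 2 := by rw [mul_comm, div_div]
  rw [ex, ez, hu, hhalf]
  simp only [Matrix.mulVec_neg, Matrix.mulVec_smul, dotProduct_neg, neg_dotProduct,
    dotProduct_smul, smul_dotProduct, smul_eq_mul] at hq ⊢
  nlinarith [mul_nonneg (sub_nonneg.2 hge) hC]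
end

section
/- Let E, A, R_x, R_z be h×h real matrices with R_x and R_z invertible, B an h×k real matrix, C an l×h real matrix, M a k×k real symmetric positive definite matrix, and 0 < λ_min ≤ λ_max. Set K_u = −(1/2)·Bᵀ·R_z⁻¹ and K_z = −(1/(2λ_min))·R_x⁻ᵀ·Cᵀ. Assume: (i) EᵀR_x = R_xᵀE ⪰ 0; (ii) R_zᵀEᵀ = E·R_z ⪰ 0; (iii) Θ(λ_min) ≺ 0 and Θ(λ_max) ≺ 0, where Θ(μ) is the symmetric 3×3 block matrix with upper blocks Θ₁₁ = A·R_z + R_zᵀAᵀ − B·Bᵀ, Θ₁₂ = −(μ/(2λ_min))·R_x⁻ᵀ·CᵀC, Θ₁₃ = (1/2)·B·M, Θ₂₂ = R_xᵀA + AᵀR_x − CᵀC, Θ₂₃ = 0, Θ₃₃ = −M. Let λ : ℝ → ℝ satisfy λ(t) ∈ [λ_min, λ_max] for all t, and let ẑ, x̂ : ℝ → ℝ^h be differentiable functions satisfying, for all t, E·ẑ′(t) = (A + B·K_u)·ẑ(t) + λ(t)·K_z·C·x̂(t) and E·x̂′(t) = (A + λ(t)·K_z·C)·x̂(t). Then V(t)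 := x̂(t)ᵀ(EᵀR_x)x̂(t) + ẑ(t)ᵀ(Eᵀ·R_z⁻¹)ẑ(t) is nonnegative and nonincreasing on [0, ∞), and for every T ≥ 0 the control energy satisfies ∫₀ᵀ (K_u·ẑ(t))ᵀ·M·(K_u·ẑ(t)) dt ≤ V(0). -/
open Matrix

/-- The quadratic form of `Theta`, expanded. -/
lemma Theta_form {h k l : ℕ}
    (A Rx Rz : Matrix (Fin h) (Fin h) ℝ)
    (B : Matrix (Fin h) (Fin k) ℝ) (C : Matrix (Fin l) (Fin h) ℝ)
    (M : Matrix (Fin k) (Fin k) ℝ) (hMsym : M.IsSymm) (lmin mu : ℝ)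
    (w x : Fin h → ℝ) (v : Fin k → ℝ) :
    (Sum.elim (Sum.elim w x) v) ⬝ᵥ (Theta A Rx Rz B C M lmin mu) *ᵥ (Sum.elim (Sum.elim w x) v)
    = 2 * (w ⬝ᵥ A *ᵥ (Rz *ᵥ w)) - (Bᵀ *ᵥ w) ⬝ᵥ (Bᵀ *ᵥ w)
      - 2 * (mu / (2 * lmin)) * ((C *ᵥ (Rx⁻¹ *ᵥ w)) ⬝ᵥ (C *ᵥ x))
      + (Bᵀ *ᵥ w) ⬝ᵥ M *ᵥ v
      + 2 * ((Rx *ᵥ x) ⬝ᵥ A *ᵥ x) - (C *ᵥ x) ⬝ᵥ (C *ᵥ x) - v ⬝ᵥ M *ᵥ v := by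
  have tr : ∀ {m n : ℕ} (N : Matrix (Fin m) (Fin n) ℝ) (a : Fin n → ℝ) (b : Fin m → ℝ),
      a ⬝ᵥ Nᵀ *ᵥ b = (N *ᵥ a) ⬝ᵥ b := by
    intro m n N a b
    rw [Matrix.dotProduct_mulVec, Matrix.vecMul_transpose]
  have e1 : w ⬝ᵥ (A * Rz) *ᵥ w = w ⬝ᵥ A *ᵥ (Rz *ᵥ w) := by rw [Matrix.mulVec_mulVec]
  have e2 : w ⬝ᵥ (Rzᵀ * Aᵀ) *ᵥ w = w ⬝ᵥ A *ᵥ (Rz *ᵥ w) := by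
    rw [← Matrix.mulVec_mulVec, tr, tr, dotProduct_comm]
  have e3 : w ⬝ᵥ (B * Bᵀ) *ᵥ w = (Bᵀ *ᵥ w) ⬝ᵥ (Bᵀ *ᵥ w) := by
    rw [← Matrix.mulVec_mulVec, ← tr, Matrix.transpose_transpose]
  have e4 : w ⬝ᵥ ((Rx⁻¹)ᵀ * (Cᵀ * C)) *ᵥ x = (C *ᵥ (Rx⁻¹ *ᵥ w)) ⬝ᵥ (C *ᵥ x) := by
    rw [← Matrix.mulVec_mulVec, ← Matrix.mulVec_mulVec, tr, tr]
  have e5 : x ⬝ᵥ ((Rx⁻¹)ᵀ * (Cᵀ * C))ᵀ *ᵥ w = (C *ᵥ (Rx⁻¹ *ᵥ w)) ⬝ᵥ (C *ᵥ x) := by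
    rw [tr, dotProduct_comm, e4]
  have e6 : x ⬝ᵥ (Rxᵀ * A) *ᵥ x = (Rx *ᵥ x) ⬝ᵥ A *ᵥ x := by
    rw [← Matrix.mulVec_mulVec, tr]
  have e7 : x ⬝ᵥ (Aᵀ * Rx) *ᵥ x = (Rx *ᵥ x) ⬝ᵥ A *ᵥ x := by
    rw [← Matrix.mulVec_mulVec, tr, dotProduct_comm]
  have e8 : x ⬝ᵥ (Cᵀ * C) *ᵥ x = (C *ᵥ x) ⬝ᵥ (C *ᵥ x) := by
    rw [← Matrix.mulVec_mulVec, tr]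
  have e9 : w ⬝ᵥ (B * M) *ᵥ v = (Bᵀ *ᵥ w) ⬝ᵥ M *ᵥ v := by
    rw [← Matrix.mulVec_mulVec, ← tr, Matrix.transpose_transpose]
  have e10 : v ⬝ᵥ (B * M)ᵀ *ᵥ w = (Bᵀ *ᵥ w) ⬝ᵥ M *ᵥ v := by
    rw [tr, dotProduct_comm, e9]
  unfold Theta
  rw [Matrix.fromBlocks_mulVec]
  simp only [Sum.elim_comp_inl, Sum.elim_comp_inr, Matrix.fromBlocks_mulVec, Matrix.fromRows_mulVec,
    Matrix.fromCols_mulVec]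
  simp only [Matrix.transpose_smul, Matrix.zero_mulVec, sumElim_dotProduct_sumElim, dotProduct_add,
    Matrix.add_mulVec, Matrix.sub_mulVec, dotProduct_sub, Matrix.smul_mulVec, dotProduct_smul,
    Matrix.neg_mulVec, dotProduct_neg, dotProduct_zero, e1, e2, e3, e4, e5, e6, e7, e8, e9, e10, smul_eq_mul]
  ring

lemma hasDerivAt_quad {h : ℕ} (P : Matrix (Fin h) (Fin h) ℝ) (hP : Pᵀ = P)
    (x : ℝ → Fin h → ℝ) (hx : Differentiable ℝ x) (t : ℝ) :
    HasDerivAt (fun t => x t ⬝ᵥ P *ᵥ (x t)) (2 * (x t ⬝ᵥ P *ᵥ (deriv x t))) t := by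
  have hd := (hx t).hasDerivAt
  have hi := hasDerivAt_pi.1 hd
  have hPi : ∀ i, HasDerivAt (fun t => (P *ᵥ (x t)) i) ((P *ᵥ (deriv x t)) i) t := by
    intro i
    simp only [Matrix.mulVec, dotProduct]
    exact HasDerivAt.fun_sum fun j _ => (hi j).const_mul _
  have := HasDerivAt.fun_sum (u := Finset.univ) fun i _ => (hi i).fun_mul (hPi i)
  have h2 : 2 * (x t ⬝ᵥ P *ᵥ (deriv x t))
      = deriv x t ⬝ᵥ P *ᵥ (x t) + x t ⬝ᵥ P *ᵥ (deriv x t) := by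
    have : deriv x t ⬝ᵥ P *ᵥ (x t) = x t ⬝ᵥ P *ᵥ (deriv x t) := by
      rw [Matrix.dotProduct_mulVec, ← Matrix.mulVec_transpose, hP, dotProduct_comm]
    rw [this]; ring
  rw [h2]
  simpa only [dotProduct, Finset.sum_add_distrib] using this

/-- Trajectory-wise energy bound of the paper's Theorem 2: for the switched closed-loop
dynamics with time-varying parameter `λ(t) ∈ [λ_min, λ_max]`, the Lyapunov function
`V(t) = x̂ᵀ(EᵀR_x)x̂ + ẑᵀ(EᵀR_z⁻¹)ẑ` is nonnegative and nonincreasing on `[0, ∞)`,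
and the control energy up to any time `T ≥ 0` is bounded by `V(0)`. -/
theorem stmt12 (h k l : ℕ)
    (E A Rx Rz : Matrix (Fin h) (Fin h) ℝ)
    (hRx : IsUnit Rx.det) (hRz : IsUnit Rz.det)
    (B : Matrix (Fin h) (Fin k) ℝ) (C : Matrix (Fin l) (Fin h) ℝ)
    (M : Matrix (Fin k) (Fin k) ℝ) (hMsym : M.IsSymm) (hM : M.PosDef)
    (lmin lmax : ℝ) (hlmin : 0 < lmin) (hle : lmin ≤ lmax)
    (Ku : Matrix (Fin k) (Fin h) ℝ) (hKu : Ku = -(1 / 2 : ℝ) • (Bᵀ * Rz⁻¹))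
    (Kz : Matrix (Fin h) (Fin l) ℝ) (hKz : Kz = -(1 / (2 * lmin)) • ((Rx⁻¹)ᵀ * Cᵀ))
    (h1 : Eᵀ * Rx = Rxᵀ * E) (h2 : (Eᵀ * Rx).PosSemidef)
    (h3 : Rzᵀ * Eᵀ = E * Rz) (h4 : (E * Rz).PosSemidef)
    (hThmin : (-(Theta A Rx Rz B C M lmin lmin)).PosDef)
    (hThmax : (-(Theta A Rx Rz B C M lmin lmax)).PosDef)
    (lam : ℝ → ℝ) (hlam : ∀ t, lam t ∈ Set.Icc lmin lmax)
    (zhat xhat : ℝ → Fin h → ℝ)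
    (hz : Differentiable ℝ zhat) (hx : Differentiable ℝ xhat)
    (hzeq : ∀ t, E.mulVec (deriv zhat t)
      = (A + B * Ku).mulVec (zhat t) + lam t • (Kz * C).mulVec (xhat t))
    (hxeq : ∀ t, E.mulVec (deriv xhat t) = (A + lam t • (Kz * C)).mulVec (xhat t))
    (V : ℝ → ℝ)
    (hV : V = fun t => xhat t ⬝ᵥ (Eᵀ * Rx).mulVec (xhat t)
      + zhat t ⬝ᵥ (Eᵀ * Rz⁻¹).mulVec (zhat t)) :
    (∀ t ∈ Set.Ici (0 : ℝ), 0 ≤ V t) ∧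
      AntitoneOn V (Set.Ici (0 : ℝ)) ∧
      ∀ T : ℝ, 0 ≤ T →
        (∫ t in (0 : ℝ)..T, Ku.mulVec (zhat t) ⬝ᵥ M.mulVec (Ku.mulVec (zhat t))) ≤ V 0 := by
  have tr : ∀ {m n : ℕ} (N : Matrix (Fin m) (Fin n) ℝ) (a : Fin n → ℝ) (b : Fin m → ℝ),
      a ⬝ᵥ Nᵀ *ᵥ b = (N *ᵥ a) ⬝ᵥ b := by
    intro m n N a b
    rw [Matrix.dotProduct_mulVec, Matrix.vecMul_transpose]
  have hRzz : ∀ t, Rz *ᵥ (Rz⁻¹ *ᵥ zhat t) = zhat t := by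
    intro t
    rw [Matrix.mulVec_mulVec, Matrix.mul_nonsing_inv _ hRz, Matrix.one_mulVec]
  have hRxx : ∀ a, Rx⁻¹ *ᵥ (Rx *ᵥ a) = a := by
    intro a
    rw [Matrix.mulVec_mulVec, Matrix.nonsing_inv_mul _ hRx, Matrix.one_mulVec]
  have hsymz : Eᵀ * Rz⁻¹ = (Rz⁻¹)ᵀ * E := by
    have a1 : (Rz⁻¹)ᵀ * Rzᵀ = 1 := by
      rw [← Matrix.transpose_mul, Matrix.mul_nonsing_inv _ hRz, Matrix.transpose_one]
    calc Eᵀ * Rz⁻¹ = ((Rz⁻¹)ᵀ * Rzᵀ) * Eᵀ * Rz⁻¹ := by rw [a1, Matrix.one_mul]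
      _ = (Rz⁻¹)ᵀ * (Rzᵀ * Eᵀ) * Rz⁻¹ := by simp only [Matrix.mul_assoc]
      _ = (Rz⁻¹)ᵀ * E * (Rz * Rz⁻¹) := by rw [h3]; simp only [Matrix.mul_assoc]
      _ = (Rz⁻¹)ᵀ * E := by rw [Matrix.mul_nonsing_inv _ hRz, Matrix.mul_one]
  -- nonnegativity
  have hVnn : ∀ t, 0 ≤ V t := by
    intro t
    rw [hV]
    have p1 := h2.dotProduct_mulVec_nonneg (xhat t)
    have p2 := h4.dotProduct_mulVec_nonneg (Rz⁻¹ *ᵥ zhat t)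
    rw [star_trivial] at p1 p2
    have p3 : zhat t ⬝ᵥ (Eᵀ * Rz⁻¹) *ᵥ zhat t
        = (Rz⁻¹ *ᵥ zhat t) ⬝ᵥ (E * Rz) *ᵥ (Rz⁻¹ *ᵥ zhat t) := by
      rw [← Matrix.mulVec_mulVec _ E Rz, hRzz, hsymz, ← Matrix.mulVec_mulVec, tr]
    simp only
    rw [p3]
    exact add_nonneg p1 p2
  -- derivative of V
  set U : ℝ → ℝ := fun t => Ku *ᵥ (zhat t) ⬝ᵥ M *ᵥ (Ku *ᵥ (zhat t)) with hU
  have hUnn : ∀ t, 0 ≤ U t := by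
    intro t
    have := hM.posSemidef.dotProduct_mulVec_nonneg (Ku *ᵥ zhat t)
    rwa [star_trivial] at this
  have hVd : ∀ t, HasDerivAt V (2 * (xhat t ⬝ᵥ (Eᵀ * Rx) *ᵥ (deriv xhat t))
      + 2 * (zhat t ⬝ᵥ (Eᵀ * Rz⁻¹) *ᵥ (deriv zhat t))) t := by
    intro t
    rw [hV]
    refine (hasDerivAt_quad _ ?_ xhat hx t).add (hasDerivAt_quad _ ?_ zhat hz t)
    · rw [Matrix.transpose_mul, Matrix.transpose_transpose, h1]
    · rw [Matrix.transpose_mul, Matrix.transpose_transpose, hsymz]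
  have hneg : ∀ mu ∈ Set.Icc lmin lmax, ∀ w x v,
      (Sum.elim (Sum.elim w x) v) ⬝ᵥ (Theta A Rx Rz B C M lmin mu) *ᵥ
        (Sum.elim (Sum.elim w x) v) ≤ 0 := by
    intro mu hmu w x v
    have q1 := hThmin.posSemidef.dotProduct_mulVec_nonneg (Sum.elim (Sum.elim w x) v)
    have q2 := hThmax.posSemidef.dotProduct_mulVec_nonneg (Sum.elim (Sum.elim w x) v)
    rw [star_trivial, Matrix.neg_mulVec, dotProduct_neg, Theta_form _ _ _ _ _ _ hMsym] at q1 q2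
    rw [Theta_form _ _ _ _ _ _ hMsym]
    have hm : ∀ m : ℝ, 2 * (m / (2 * lmin)) = m / lmin := by intro m; field_simp
    rw [hm] at q1 q2 ⊢
    generalize (C *ᵥ (Rx⁻¹ *ᵥ w)) ⬝ᵥ (C *ᵥ x) = s at *
    rcases le_total 0 s with hs | hs
    · have : lmin / lmin * s ≤ mu / lmin * s := by
        have := hmu.1
        gcongr
      linarith
    · have : lmax / lmin * s ≤ mu / lmin * s := by
        have : mu / lmin ≤ lmax / lmin := by
          have := hmu.2
          gcongr
        exact mul_le_mul_of_nonpos_right this hs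
      linarith
  have hVd' : ∀ t, 2 * (xhat t ⬝ᵥ (Eᵀ * Rx) *ᵥ (deriv xhat t))
      + 2 * (zhat t ⬝ᵥ (Eᵀ * Rz⁻¹) *ᵥ (deriv zhat t)) + U t ≤ 0 := by
    intro t
    have q := hneg (lam t) (hlam t) (Rz⁻¹ *ᵥ zhat t) (xhat t)
      ((1 / 2 : ℝ) • (Bᵀ *ᵥ (Rz⁻¹ *ᵥ zhat t)))
    rw [Theta_form _ _ _ _ _ _ hMsym, hRzz] at q
    have r1 : xhat t ⬝ᵥ (Eᵀ * Rx) *ᵥ (deriv xhat t)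
        = (Rx *ᵥ xhat t) ⬝ᵥ A *ᵥ xhat t
          - lam t / (2 * lmin) * ((C *ᵥ xhat t) ⬝ᵥ (C *ᵥ xhat t)) := by
      rw [h1, ← Matrix.mulVec_mulVec, tr, hxeq, Matrix.add_mulVec, dotProduct_add, hKz,
        Matrix.smul_mulVec, dotProduct_smul, Matrix.smul_mul, Matrix.smul_mulVec, dotProduct_smul,
        ← Matrix.mulVec_mulVec, ← Matrix.mulVec_mulVec, tr, tr, hRxx, smul_eq_mul, smul_eq_mul]
      ring
    have hKuz : Ku *ᵥ zhat t = -(1 / 2 : ℝ) • (Bᵀ *ᵥ (Rz⁻¹ *ᵥ zhat t)) := by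
      rw [hKu, Matrix.smul_mulVec, Matrix.mulVec_mulVec]
    have r2 : zhat t ⬝ᵥ (Eᵀ * Rz⁻¹) *ᵥ (deriv zhat t)
        = (Rz⁻¹ *ᵥ zhat t) ⬝ᵥ A *ᵥ zhat t
          - 1 / 2 * ((Bᵀ *ᵥ (Rz⁻¹ *ᵥ zhat t)) ⬝ᵥ (Bᵀ *ᵥ (Rz⁻¹ *ᵥ zhat t)))
          - lam t / (2 * lmin) * ((C *ᵥ (Rx⁻¹ *ᵥ (Rz⁻¹ *ᵥ zhat t))) ⬝ᵥ (C *ᵥ xhat t)) := by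
      rw [hsymz, ← Matrix.mulVec_mulVec, tr, hzeq, Matrix.add_mulVec, dotProduct_add,
        dotProduct_add, ← Matrix.mulVec_mulVec _ B Ku, hKuz, hKz,
        dotProduct_smul, Matrix.smul_mul, Matrix.smul_mulVec, dotProduct_smul,
        ← Matrix.mulVec_mulVec, ← Matrix.mulVec_mulVec, tr, tr, smul_eq_mul, smul_eq_mul,
        Matrix.mulVec_smul, dotProduct_smul, ← tr Bᵀ, Matrix.transpose_transpose, smul_eq_mul]
      ring
    have r3 : U t = 1 / 4 * ((Bᵀ *ᵥ (Rz⁻¹ *ᵥ zhat t)) ⬝ᵥ M *ᵥ (Bᵀ *ᵥ (Rz⁻¹ *ᵥ zhat t))) := by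
      simp only [hU]
      rw [hKuz, Matrix.mulVec_smul, dotProduct_smul, smul_dotProduct, smul_eq_mul, smul_eq_mul]
      ring
    have r4 : 0 ≤ (C *ᵥ xhat t) ⬝ᵥ (C *ᵥ xhat t) := by
      simpa using dotProduct_star_self_nonneg (C *ᵥ xhat t)
    have r5 : (1 / 2 : ℝ) ≤ lam t / (2 * lmin) := by
      rw [div_le_div_iff₀ (by norm_num) (by positivity)]
      linarith [(hlam t).1]
    have r6 := mul_le_mul_of_nonneg_right r5 r4
    rw [Matrix.mulVec_smul, dotProduct_smul, smul_dotProduct, dotProduct_smul, smul_eq_mul,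
      smul_eq_mul] at q
    rw [r1, r2, r3]
    linarith
  have hUc : Continuous U := by
    have hzc := hz.continuous
    have c1 : Continuous fun t => Ku *ᵥ zhat t := continuous_const.matrix_mulVec hzc
    exact c1.dotProduct (continuous_const.matrix_mulVec c1)
  refine ⟨fun t _ => hVnn t, ?_, ?_⟩
  · refine Antitone.antitoneOn (antitone_of_hasDerivAt_nonpos hVd fun t => ?_) _
    have := hVd' t
    have := hUnn t
    simp only [Pi.zero_apply]
    linarith
  · intro T hT
    have hG : ∀ t, HasDerivAt (fun t => V t + ∫ s in (0 : ℝ)..t, U s) _ t := fun t =>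
      (hVd t).add (hUc.integral_hasStrictDerivAt 0 t).hasDerivAt
    have hanti := antitone_of_hasDerivAt_nonpos hG fun t => hVd' t
    have := hanti hT
    simp only [intervalIntegral.integral_same, add_zero] at this
    have := hVnn T
    change ∫ s in (0 : ℝ)..T, U s ≤ V 0
    linarith
end
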